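/- arXiv:1305.1664 — 4 statements merged into one kernel-verified Lean document; each statement's English description precedes it below -/
import Mathlib

section
/- Let m ≥ 1 and let f₁, f₂ : Sᵐ → S¹ be continuous maps into the circle that are homotopic to each other. Then the homotopy coincidence space E(f₁,f₂) has infinitely many path components. -/
/-- The unit sphere `Sᵏ ⊆ ℝ^{k+1}`; in particular `Sph 1` is the unit circle. -/
abbrev Sph (k : ℕ) : Type :=
  Metric.sphere (0 : EuclideanSpace ℝ (Fin (k + 1))) 1

/-- The homotopy coincidence space `E(f₁,f₂)`. -/
abbrev HCS {X Y : Type} [TopologicalSpace X] [TopologicalSpace Y]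
    (f₁ f₂ : C(X, Y)) : Type :=
  {p : X × C(unitInterval, Y) // p.2 0 = f₁ p.1 ∧ p.2 1 = f₂ p.1}

/-! Over `E(f₁,f₂)` the pullbacks of `f₁` and `f₂` are tautologically homotopic: follow `θ` at
`(x, θ)`. A homotopy from `f₁` to `f₂` pulls back to a second one. Running along the first and back
along the second gives a loop at `f₁ x` for each point `(x, θ)`, and naturality of the two
homotopies shows that its conjugacy class does not change along a path in `E(f₁,f₂)` between two
points over the same `x`. Every element of `π₁(Y, f₁ x)` is the class of such a loop, so `E(f₁,f₂)`
has at least as many path components as `π₁(Y, f₁ x)` has conjugacy classes. For the circle, `π₁`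
is infinite and abelian. -/

open CategoryTheory FundamentalGroupoidFunctor

/-- The conjugacy class in the vertex group at `y` of the difference `θ ≫ τ⁻¹` of two arrows from
`y` to `z` in a groupoid. -/
noncomputable def differenceClass {C : Type*} [Groupoid C] {y z : C} (τ θ : y ⟶ z) :
    ConjClasses (End y) :=
  .mk (End.of (θ ≫ inv τ))

lemma differenceClass_surjective {C : Type*} [Groupoid C] {y z : C} (τ : y ⟶ z) :
    Function.Surjective (differenceClass τ) := by
  intro c
  obtain ⟨α, rfl⟩ := c.exists_rep
  exact ⟨End.asHom α ≫ τ, by simp [differenceClass]⟩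

namespace HCS

variable {X Y : Type} [TopologicalSpace X] [TopologicalSpace Y]

/-- The projection `E(f₁,f₂) → X`. -/
def proj (f₁ f₂ : C(X, Y)) : C(HCS f₁ f₂, X) where
  toFun p := p.1.1

/-- The tautological homotopy between the pullbacks of `f₁` and `f₂` to `E(f₁,f₂)`, which at
`(x, θ)` follows `θ`. -/
def tautologicalHomotopy (f₁ f₂ : C(X, Y)) :
    (f₁.comp (proj f₁ f₂)).Homotopy (f₂.comp (proj f₁ f₂)) where
  toFun q := q.2.1.2 q.1
  map_zero_left p := p.2.1
  map_one_left p := p.2.2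

variable {f₁ f₂ : C(X, Y)}

/-- The point `(x, θ)` of `E(f₁,f₂)`. -/
def ofPath (x : X) (θ : Path (f₁ x) (f₂ x)) : HCS f₁ f₂ :=
  ⟨(x, θ), θ.source, θ.target⟩

lemma differenceClass_evalAt_eq_of_joined (H : f₁.Homotopy f₂) {x : X}
    {θ θ' : Path (f₁ x) (f₂ x)} (h : Joined (ofPath x θ) (ofPath x θ')) :
    differenceClass (FundamentalGroupoid.fromPath (.mk (H.evalAt x))) (.mk θ) =
      differenceClass (FundamentalGroupoid.fromPath (.mk (H.evalAt x))) (.mk θ') := by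
  obtain ⟨γ⟩ := h
  let T := homotopicMapsNatIso (tautologicalHomotopy f₁ f₂)
  let N := homotopicMapsNatIso (H.compContinuousMap (proj f₁ f₂))
  have natural := (T ≫ inv N).naturality (FundamentalGroupoid.fromPath (.mk γ))
  simp only [NatTrans.comp_app, NatIso.isIso_inv_app] at natural
  let u : FundamentalGroup Y (f₁ x) :=
    .fromPath (.mk (γ.map (f₁.comp (proj f₁ f₂)).continuous))
  -- Over `(x, θ)` the component of `T ≫ inv N` is `θ ≫ inv (H.evalAt x)` by definition.
  exact ConjClasses.mk_eq_mk_iff_isConj.2 (isConj_iff.2 ⟨u, mul_inv_eq_of_eq_mul natural.symm⟩)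

end HCS

lemma infinite_conjClasses_fundamentalGroup_of_isAddQuotientCoveringMap {E B A : Type*}
    [TopologicalSpace E] [TopologicalSpace B] [PathConnectedSpace E] [AddCommGroup A]
    [AddAction A E] [Infinite A] {p : E → B} (hp : IsAddQuotientCoveringMap p A) (b : B) :
    Infinite (ConjClasses (FundamentalGroup B b)) := by
  obtain ⟨e, he⟩ := hp.surjective b
  have : Infinite (Multiplicative A)ᵐᵒᵖ := MulOpposite.opEquiv.infinite_iff.1 inferInstance
  have : Infinite (ConjClasses (Multiplicative A)ᵐᵒᵖ) := ConjClasses.mkEquiv.infinite_iff.1 this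
  exact .of_surjective _
    (ConjClasses.map_surjective (hp.fundamentalGroupToMulOpposite_surjective ⟨e, he⟩))

/-- The identification of `Sph 1` with the unit circle of `ℂ` given by `(x, y) ↦ x + iy`. -/
noncomputable def sphOneHomeomorphCircle : Sph 1 ≃ₜ Circle :=
  Complex.orthonormalBasisOneI.repr.symm.toHomeomorph.subtype fun v ↦ by
    change _ ↔ _ ∈ Metric.sphere 0 1
    simp only [mem_sphere_zero_iff_norm, LinearIsometryEquiv.coe_toHomeomorph,
      LinearIsometryEquiv.norm_map]

instance infinite_conjClasses_fundamentalGroup_sph_one (v : Sph 1) :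
    Infinite (ConjClasses (FundamentalGroup (Sph 1) v)) :=
  have : Infinite (AddSubgroup.zmultiples (2 * Real.pi)) :=
    Set.infinite_coe_iff.2 <| infinite_zmultiples.2 <|
      not_isOfFinAddOrder_of_isAddTorsionFree Real.two_pi_pos.ne'
  infinite_conjClasses_fundamentalGroup_of_isAddQuotientCoveringMap
    (Circle.isAddQuotientCoveringMap_exp.homeomorph_comp sphOneHomeomorphCircle.symm) v

theorem stmt1_general {X Y : Type} [TopologicalSpace X] [TopologicalSpace Y] (f₁ f₂ : C(X, Y))
    (h : f₁.Homotopic f₂) (x : X) [Infinite (ConjClasses (FundamentalGroup Y (f₁ x)))] :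
    Infinite (ZerothHomotopy (HCS f₁ f₂)) := by
  obtain ⟨H⟩ := h
  have surj := (differenceClass_surjective
    (FundamentalGroupoid.fromPath (.mk (H.evalAt x)))).comp Path.Homotopic.Quotient.mk_surjective
  refine .of_injective (fun c ↦ .mk (HCS.ofPath x (Function.surjInv surj c))) fun c c' hcc' ↦ ?_
  calc
    c = _ := (Function.surjInv_eq surj c).symm
    _ = _ := HCS.differenceClass_evalAt_eq_of_joined H (Quotient.exact hcc')
    _ = c' := Function.surjInv_eq surj c'

theorem stmt1 (m : ℕ) (hm : 1 ≤ m) (f₁ f₂ : C(Sph m, Sph 1))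
    (h : f₁.Homotopic f₂) :
    Infinite (ZerothHomotopy (HCS f₁ f₂)) := by
  obtain ⟨x⟩ : Nonempty (Sph m) := (NormedSpace.sphere_nonempty.2 zero_le_one).to_subtype
  exact stmt1_general f₁ f₂ h x
end

section
/- Let m ≥ 1, n ≥ 2, and let f₁, f₂ : Sᵐ → Sⁿ be continuous maps such that f₁ is NOT homotopic to a ∘ f₂ (a the antipodal map). Then MCC(f₁,f₂) = 1; that is, for every pair of continuous maps f₁' homotopic to f₁ and f₂' homotopic to f₂ the coincidence set {x : f₁'(x) = f₂'(x)} is nonempty, and there exists such a pair whose coincidence set has exactly one path component. -/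
/-- The antipodal map `a : Sⁿ → Sⁿ`, `a(x) = -x`. -/
noncomputable def antipodal (n : ℕ) : C(Sph n, Sph n) :=
  ⟨fun x => ⟨-(x : EuclideanSpace ℝ (Fin (n + 1))), by
      have hx : ‖(x : EuclideanSpace ℝ (Fin (n + 1)))‖ = 1 :=
        mem_sphere_zero_iff_norm.mp x.2
      simp [mem_sphere_zero_iff_norm, hx]⟩,
   by
    apply Continuous.subtype_mk
    exact continuous_subtype_val.neg⟩

/-!
A pair whose coincidence set is empty would have `f₁'` homotopic to `a ∘ f₂'` along normalized
segments, so only a pair with path connected coincidence set has to be found.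

Make both maps `f` and `g` of the pair `C¹` and shift one of them by a small generic vector `v`.
Along a `C¹` curve the maps then never become antipodal: this fails only for `v` in the image of a
`C¹` map from a surface, which has Hausdorff dimension at most `2`, less than that of the ambient
space of the target. As `v` can be chosen for countably many curves at once, the open set `U` of
points where the maps are not antipodal contains the segments between dense sets of points of a
family of charts, which makes `U` path connected. The coincidence set can then be enlarged to a
compact path connected set `L ⊆ U`. Finally, choose `d ≥ 0` with zero set `L` and replace `f` by the
radial projection of `d • f + ‖f + g‖ • g`: this vector never points in the direction of `-f`,
because `d > 0` where `f = -g`, and it points in the direction of `g` exactly where `d = 0`. The new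
map is therefore homotopic to `f`, and its coincidence set with `g` is `L`.
-/

open Set Metric Module Topology
open scoped ContDiff Manifold unitInterval

section SphereValuedMaps

variable {X F : Type*} [TopologicalSpace X] [NormedAddCommGroup F] [NormedSpace ℝ F]

/-- The antipodal map of the unit sphere of an arbitrary normed space, bundled as a continuous map
so that it can be composed; `antipodal n` is the case of Euclidean space. -/
def sphereNeg (F : Type*) [NormedAddCommGroup F] :
    C(sphere (0 : F) 1, sphere (0 : F) 1) :=
  ⟨Neg.neg, continuous_neg⟩

/-- The radial projection `x ↦ u x / ‖u x‖` of a nowhere vanishing continuous map `u` to the unit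
sphere. -/
noncomputable def radialProjection (u : C(X, F)) (hu : ∀ x, u x ≠ 0) : C(X, sphere (0 : F) 1) where
  toFun x := ⟨NormedSpace.normalize (u x), by simpa using hu x⟩
  continuous_toFun := by
    have hnorm : ∀ x, ‖u x‖ ≠ 0 := fun x ↦ norm_ne_zero_iff.mpr (hu x)
    exact ((u.continuous.norm.inv₀ hnorm).smul u.continuous).subtype_mk _

theorem radialProjection_apply_eq_iff_sameRay {u : C(X, F)} {hu : ∀ x, u x ≠ 0} {x : X}
    {y : sphere (0 : F) 1} : radialProjection u hu x = y ↔ SameRay ℝ (u x) y := by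
  rw [sameRay_iff_inv_norm_smul_eq_of_ne (hu x) (ne_zero_of_mem_unit_sphere y), Subtype.ext_iff,
    norm_eq_of_mem_sphere, inv_one, one_smul]
  rfl

theorem sameRay_coe_sphere_iff {y z : sphere (0 : F) 1} : SameRay ℝ (y : F) z ↔ y = z := by
  rw [sameRay_iff_of_norm_eq (by simp), Subtype.ext_iff]

theorem homotopic_of_forall_ne_neg {f g : C(X, sphere (0 : F) 1)} (h : ∀ x, f x ≠ -g x) :
    f.Homotopic g := by
  let u : C(I × X, F) :=
    ⟨fun p ↦ AffineMap.lineMap (f p.2 : F) (g p.2 : F) (p.1 : ℝ), by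
      simp only [AffineMap.lineMap_apply_module]; fun_prop⟩
  have hu : ∀ p, u p ≠ 0 := by
    rintro ⟨t, x⟩ hzero
    have hmem : (0 : F) ∈ segment ℝ (f x : F) (g x) := by
      rw [segment_eq_image_lineMap]
      exact ⟨t, t.2, hzero⟩
    rw [mem_segment_iff_sameRay, zero_sub, sub_zero, ← coe_neg_sphere,
      sameRay_coe_sphere_iff] at hmem
    exact h x (neg_eq_iff_eq_neg.mp hmem)
  refine ⟨⟨radialProjection u hu, fun x ↦ ?_, fun x ↦ ?_⟩⟩ <;>
    simp [radialProjection_apply_eq_iff_sameRay, u, SameRay.refl]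

theorem homotopic_radialProjection {f : C(X, sphere (0 : F) 1)} {u : C(X, F)}
    (hu : ∀ x, u x ≠ 0) (h : ∀ x, ¬ SameRay ℝ (u x) (-f x)) :
    f.Homotopic (radialProjection u hu) := by
  refine (homotopic_of_forall_ne_neg fun x hx ↦ h x ?_).symm
  rwa [← coe_neg_sphere, ← radialProjection_apply_eq_iff_sameRay (hu := hu)]

theorem exists_eq_of_not_homotopic_sphereNeg_comp {f₁ f₂ g₁ g₂ : C(X, sphere (0 : F) 1)}
    (h : ¬ f₁.Homotopic ((sphereNeg F).comp f₂)) (h₁ : f₁.Homotopic g₁)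
    (h₂ : f₂.Homotopic g₂) : ∃ x, g₁ x = g₂ x := by
  by_contra! hne
  have hneg : g₁.Homotopic ((sphereNeg F).comp g₂) :=
    homotopic_of_forall_ne_neg fun x ↦ by simpa [sphereNeg] using hne x
  exact h (h₁.trans (hneg.trans (.comp (.refl _) h₂.symm)))

end SphereValuedMaps

section PrescribedCoincidence

theorem norm_coe_add_coe_eq_zero_iff {F : Type*} [NormedAddCommGroup F]
    {y z : sphere (0 : F) 1} : ‖(y + z : F)‖ = 0 ↔ y = -z := by
  rw [norm_eq_zero, add_eq_zero_iff_eq_neg, Subtype.ext_iff, coe_neg_sphere]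

variable {X F : Type*} [TopologicalSpace X] [NormedAddCommGroup F] [NormedSpace ℝ F]

theorem sameRay_smul_coe_sphere_iff {y z : sphere (0 : F) 1} {c : ℝ} (hc : 0 ≤ c) :
    SameRay ℝ (c • (y : F)) z ↔ c = 0 ∨ y = z := by
  refine ⟨fun h ↦ hc.eq_or_lt'.imp_right fun hpos ↦ ?_, ?_⟩
  · rw [← sameRay_coe_sphere_iff]
    simpa [smul_smul, hpos.ne'] using h.pos_smul_left (inv_pos.mpr hpos)
  · rintro (rfl | rfl)
    · simp
    · exact SameRay.sameRay_nonneg_smul_left _ hc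

theorem not_sameRay_smul_add_norm_smul_neg {y z : sphere (0 : F) 1} {d : ℝ} (hd : 0 ≤ d)
    (h : d = 0 → y ≠ -z) : ¬ SameRay ℝ (d • (y : F) + ‖(y + z : F)‖ • (z : F)) (-y) := by
  intro hray
  have hkz : SameRay ℝ (‖(y + z : F)‖ • (z : F)) ((-y : sphere (0 : F) 1) : F) := by
    simpa using hray.add_left (SameRay.sameRay_nonneg_smul_left (-(y : F)) hd)
  have hyz : y = -z := by
    rcases (sameRay_smul_coe_sphere_iff (norm_nonneg _)).mp hkz with hk | hzy
    · exact norm_coe_add_coe_eq_zero_iff.mp hk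
    · rw [hzy, neg_neg]
  have hdy : SameRay ℝ (d • (y : F)) ((-y : sphere (0 : F) 1) : F) := by simpa [hyz] using hray
  rcases (sameRay_smul_coe_sphere_iff hd).mp hdy with hd0 | hyy
  · exact h hd0 hyz
  · exact ne_neg_of_mem_unit_sphere ℝ y hyy

theorem sameRay_smul_add_norm_smul_iff {y z : sphere (0 : F) 1} {d : ℝ} (hd : 0 ≤ d)
    (hzero : y = z → d = 0) :
    SameRay ℝ (d • (y : F) + ‖(y + z : F)‖ • (z : F)) z ↔ d = 0 := by
  refine ⟨fun hray ↦ ?_, ?_⟩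
  · obtain ⟨r, hr, hrz⟩ := hray.exists_nonneg_right (ne_zero_of_mem_unit_sphere z)
    have hdy : d • (y : F) = (r - ‖(y + z : F)‖) • (z : F) := by
      rw [sub_smul, ← hrz, add_sub_cancel_right]
    rcases le_total ‖(y + z : F)‖ r with hle | hle
    · have hyz : SameRay ℝ (d • (y : F)) z :=
        hdy ▸ SameRay.sameRay_nonneg_smul_left _ (sub_nonneg.mpr hle)
      exact ((sameRay_smul_coe_sphere_iff hd).mp hyz).elim id hzero
    · have hyz : SameRay ℝ (d • (y : F)) ((-z : sphere (0 : F) 1) : F) := by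
        rw [hdy, ← neg_sub, neg_smul, ← smul_neg]
        exact SameRay.sameRay_nonneg_smul_left _ (sub_nonneg.mpr hle)
      rcases (sameRay_smul_coe_sphere_iff hd).mp hyz with hd0 | hyz
      · exact hd0
      · have hk := norm_coe_add_coe_eq_zero_iff.mpr hyz
        have hr0 : r = 0 := le_antisymm (hk ▸ hle) hr
        simpa [hk, hr0, ne_zero_of_mem_unit_sphere y] using hdy
  · rintro rfl
    simp

theorem exists_homotopic_forall_eq_iff_eq_zero (f g : C(X, sphere (0 : F) 1)) (d : C(X, ℝ))
    (hd : ∀ x, 0 ≤ d x) (hzero : ∀ x, f x = g x → d x = 0) (h : ∀ x, d x = 0 → f x ≠ -g x) :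
    ∃ f' : C(X, sphere (0 : F) 1), f.Homotopic f' ∧ ∀ x, f' x = g x ↔ d x = 0 := by
  let u : C(X, F) := ⟨fun x ↦ d x • (f x : F) + ‖(f x + g x : F)‖ • (g x : F), by fun_prop⟩
  have hray : ∀ x, ¬ SameRay ℝ (u x) (-f x) := fun x ↦
    not_sameRay_smul_add_norm_smul_neg (hd x) (h x)
  have hu : ∀ x, u x ≠ 0 := fun x hx ↦ hray x (by simp [hx])
  refine ⟨radialProjection u hu, homotopic_radialProjection hu hray, fun x ↦ ?_⟩
  rw [radialProjection_apply_eq_iff_sameRay]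
  exact sameRay_smul_add_norm_smul_iff (hd x) (hzero x)

end PrescribedCoincidence

section PathConnectedSubsets

variable {X : Type*} [TopologicalSpace X]

theorem isPathConnected_of_dense_of_forall_exists_nhds [ConnectedSpace X] {U : Set X} (hU : Dense U)
    (h : ∀ x, ∃ W ∈ 𝓝 x, IsPathConnected (U ∩ W)) : IsPathConnected U := by
  let P (x y : X) : Prop :=
    ∃ p, (∀ᶠ a in 𝓝[U] x, JoinedIn U p a) ∧ ∀ᶠ b in 𝓝[U] y, JoinedIn U p b
  have hsymm : Std.Symm P := ⟨fun x y ⟨p, hx, hy⟩ ↦ ⟨p, hy, hx⟩⟩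
  have htrans : IsTrans X P := ⟨fun x y z ⟨p, hx, hy⟩ ⟨q, hy', hz⟩ ↦ by
    have : (𝓝[U] y).NeBot := mem_closure_iff_nhdsWithin_neBot.mp (hU y)
    obtain ⟨b, hpb, hqb⟩ := (hy.and hy').exists
    exact ⟨p, hx, hz.mono fun c hqc ↦ (hpb.trans hqb.symm).trans hqc⟩⟩
  have hlocal : ∀ x, ∀ᶠ y in 𝓝 x, P x y := fun x ↦ by
    obtain ⟨W, hW, p, -, hp⟩ := h x
    have hnhds : ∀ y, W ∈ 𝓝 y → ∀ᶠ a in 𝓝[U] y, JoinedIn U p a := fun y hy ↦ by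
      filter_upwards [self_mem_nhdsWithin, mem_nhdsWithin_of_mem_nhds hy] with a haU haW
      exact (hp ⟨haU, haW⟩).mono inter_subset_left
    filter_upwards [eventually_mem_nhds_iff.mpr hW] with y hy
    exact ⟨p, hnhds x hW, hnhds y hy⟩
  obtain ⟨x, hx⟩ := hU.nonempty
  refine ⟨x, hx, fun {y} hy ↦ ?_⟩
  obtain ⟨p, hpx, hpy⟩ := PreconnectedSpace.induction₂ P hlocal htrans x y
  exact (hpx.self_of_nhdsWithin hx).symm.trans (hpy.self_of_nhdsWithin hy)

theorem exists_isCompact_isPathConnected_between {K U : Set X} (hK : IsCompact K)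
    (hU : IsPathConnected U) (h : ∀ x ∈ K, ∃ N ∈ 𝓝 x, IsCompact N ∧ IsPathConnected N ∧ N ⊆ U) :
    ∃ L, IsCompact L ∧ IsPathConnected L ∧ K ⊆ L ∧ L ⊆ U := by
  let p (s : Set X) : Prop := ∃ L, IsCompact L ∧ IsPathConnected L ∧ s ⊆ L ∧ L ⊆ U
  refine hK.induction_on (p := p) ?_ ?_ ?_ ?_
  · obtain ⟨x, hx⟩ := hU.nonempty
    exact ⟨{x}, isCompact_singleton, isPathConnected_singleton x, empty_subset _,
      singleton_subset_iff.mpr hx⟩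
  · rintro s t hst ⟨L, hLc, hLp, htL, hLU⟩
    exact ⟨L, hLc, hLp, hst.trans htL, hLU⟩
  · rintro s t ⟨L₁, hc₁, hp₁, hs, hU₁⟩ ⟨L₂, hc₂, hp₂, ht, hU₂⟩
    obtain ⟨a, ha⟩ := hp₁.nonempty
    obtain ⟨b, hb⟩ := hp₂.nonempty
    obtain ⟨γ, hγ⟩ := hU.joinedIn a (hU₁ ha) b (hU₂ hb)
    have : PathConnectedSpace I :=
      isPathConnected_iff_pathConnectedSpace.mp ((convex_Icc 0 1).isPathConnected ⟨0, by simp⟩)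
    have hγp : IsPathConnected (range γ) := isPathConnected_range γ.continuous
    have hp₁γ : IsPathConnected (L₁ ∪ range γ) := hp₁.union hγp ⟨a, ha, γ.source_mem_range⟩
    exact ⟨L₁ ∪ range γ ∪ L₂, (hc₁.union (isCompact_range γ.continuous)).union hc₂,
      hp₁γ.union hp₂ ⟨b, .inr γ.target_mem_range, hb⟩,
      union_subset_union (hs.trans subset_union_left) ht,
      union_subset (union_subset hU₁ (range_subset_iff.mpr hγ)) hU₂⟩
  · intro x hx
    obtain ⟨N, hN, hNc, hNp, hNU⟩ := h x hx
    exact ⟨N, mem_nhdsWithin_of_mem_nhds hN, N, hNc, hNp, Subset.rfl, hNU⟩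

theorem isPathConnected_inter_of_dense_segments {E : Type*} [NormedAddCommGroup E]
    [NormedSpace ℝ E] {B V D : Set E} (hB : Convex ℝ B) (hBo : IsOpen B) (hBne : B.Nonempty)
    (hV : IsOpen V) (hD : Dense D)
    (h : ∀ a ∈ D ∩ B, ∀ b ∈ D ∩ B, segment ℝ a b ⊆ V) : IsPathConnected (V ∩ B) := by
  have hseg : ∀ a ∈ D ∩ B, ∀ b ∈ D ∩ B, JoinedIn (V ∩ B) a b := fun a ha b hb ↦
    .of_segment_subset (subset_inter (h a ha b hb) (hB.segment_subset ha.2 hb.2))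
  have hnear : ∀ x ∈ V ∩ B, ∃ a ∈ D ∩ B, JoinedIn (V ∩ B) a x := fun x hx ↦ by
    obtain ⟨ε, hε, hball⟩ := Metric.isOpen_iff.mp (hV.inter hBo) x hx
    obtain ⟨a, ha, haD⟩ := hD.inter_open_nonempty _ isOpen_ball (nonempty_ball.mpr hε)
    exact ⟨a, ⟨haD, (hball ha).2⟩, .of_segment_subset
      (((convex_ball x ε).segment_subset ha (mem_ball_self hε)).trans hball)⟩
  obtain ⟨p, hpB, hpD⟩ := hD.inter_open_nonempty B hBo hBne
  have hp : p ∈ D ∩ B := ⟨hpD, hpB⟩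
  refine ⟨p, ⟨h p hp p hp (left_mem_segment ℝ p p), hpB⟩, fun {x} hx ↦ ?_⟩
  obtain ⟨a, ha, hax⟩ := hnear x hx
  exact (hseg p hp a ha).trans hax

end PathConnectedSubsets

section Manifold

variable {E M : Type*} [NormedAddCommGroup E] [NormedSpace ℝ E] [TopologicalSpace M]
  [ChartedSpace E M]

theorem exists_nhds_isCompact_isPathConnected_subset [FiniteDimensional ℝ E] {x : M} {U : Set M}
    (hU : U ∈ 𝓝 x) : ∃ N ∈ 𝓝 x, IsCompact N ∧ IsPathConnected N ∧ N ⊆ U := by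
  let φ := chartAt E x
  have hx : x ∈ φ.source := mem_chart_source E x
  have hV : φ.target ∩ φ.symm ⁻¹' U ∈ 𝓝 (φ x) :=
    Filter.inter_mem (chart_target_mem_nhds E x)
      (φ.continuousAt_symm (φ.map_source hx) (by rwa [φ.left_inv hx]))
  obtain ⟨r, hr, hball⟩ := nhds_basis_closedBall.mem_iff.mp hV
  have hcont : ContinuousOn φ.symm (closedBall (φ x) r) :=
    φ.continuousOn_symm.mono fun y hy ↦ (hball hy).1
  refine ⟨φ.symm '' closedBall (φ x) r, ?_, (isCompact_closedBall _ _).image_of_continuousOn hcont,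
    ?_, image_subset_iff.mpr fun y hy ↦ (hball hy).2⟩
  · rw [← φ.symm_map_nhds_eq hx]
    exact Filter.image_mem_map (closedBall_mem_nhds _ hr)
  · exact ((convex_closedBall _ _).isPathConnected ⟨_, mem_closedBall_self hr.le⟩).image' hcont

theorem exists_countable_curves_nhds_isPathConnected_inter [FiniteDimensional ℝ E]
    [IsManifold 𝓘(ℝ, E) 1 M] (x : M) :
    ∃ W : Set M, IsOpen W ∧ x ∈ W ∧ ∃ C : Set (ℝ → M), C.Countable ∧
      (∀ γ ∈ C, ContMDiffOn 𝓘(ℝ, ℝ) 𝓘(ℝ, E) 1 γ I) ∧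
      ∀ U : Set M, IsOpen U → (∀ γ ∈ C, MapsTo γ I U) →
        IsPathConnected (U ∩ W) ∧ W ⊆ closure U := by
  let φ := chartAt E x
  obtain ⟨r, hr, hball⟩ := nhds_basis_ball.mem_iff.mp (chart_target_mem_nhds E x)
  obtain ⟨D, hDc, hD⟩ := TopologicalSpace.exists_countable_dense E
  let B := ball (φ x) r
  let curve (p : E × E) : ℝ → M := φ.symm ∘ AffineMap.lineMap p.1 p.2
  refine ⟨φ.symm '' B, φ.isOpen_image_symm_of_subset_target isOpen_ball hball,
    ⟨φ x, mem_ball_self hr, φ.left_inv (mem_chart_source E x)⟩,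
    curve '' ((D ∩ B) ×ˢ (D ∩ B)),
    (((hDc.mono inter_subset_left).prod (hDc.mono inter_subset_left)).image _), ?_, ?_⟩
  · rintro _ ⟨⟨a, b⟩, ⟨ha, hb⟩, rfl⟩
    have hline : MapsTo (AffineMap.lineMap a b : ℝ → E) I φ.target := fun t ht ↦
      hball ((convex_ball _ _).lineMap_mem ha.2 hb.2 ht)
    exact contMDiffOn_chart_symm.comp (AffineMap.contDiff_lineMap a b).contMDiff.contMDiffOn hline
  · intro U hU hmaps
    have hDU : ∀ a ∈ D ∩ B, ∀ b ∈ D ∩ B, ∀ y ∈ segment ℝ a b, φ.symm y ∈ U := by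
      intro a ha b hb y hy
      rw [segment_eq_image_lineMap] at hy
      obtain ⟨t, ht, rfl⟩ := hy
      exact hmaps _ ⟨(a, b), ⟨ha, hb⟩, rfl⟩ ht
    constructor
    · have hpc : IsPathConnected ((φ.target ∩ φ.symm ⁻¹' U) ∩ B) :=
        isPathConnected_inter_of_dense_segments (convex_ball _ _) isOpen_ball (nonempty_ball.mpr hr)
          (φ.isOpen_inter_preimage_symm hU) hD fun a ha b hb y hy ↦
            ⟨hball ((convex_ball _ _).segment_subset ha.2 hb.2 hy), hDU a ha b hb y hy⟩
      convert hpc.image' (φ.continuousOn_symm.mono fun y hy ↦ hy.1.1) using 1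
      rw [inter_right_comm, inter_eq_right.mpr hball, inter_comm U, image_inter_preimage]
    · rintro _ ⟨y, hy, rfl⟩
      have hyD : y ∈ closure (D ∩ B) := inter_comm B D ▸ hD.open_subset_closure_inter isOpen_ball hy
      refine closure_mono ?_ (mem_closure_image (φ.continuousAt_symm (hball hy)) hyD)
      exact image_subset_iff.mpr fun a ha ↦ hDU a ha a ha a (left_mem_segment ℝ a a)

theorem exists_countable_curves_forall_isOpen_isPathConnected [FiniteDimensional ℝ E]
    [IsManifold 𝓘(ℝ, E) 1 M] [SigmaCompactSpace M] [ConnectedSpace M] :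
    ∃ C : Set (ℝ → M), C.Countable ∧ (∀ γ ∈ C, ContMDiffOn 𝓘(ℝ, ℝ) 𝓘(ℝ, E) 1 γ I) ∧
      ∀ U : Set M, IsOpen U → (∀ γ ∈ C, MapsTo γ I U) → IsPathConnected U := by
  choose W hWo hxW C hCc hCs hC using
    exists_countable_curves_nhds_isPathConnected_inter (E := E) (M := M)
  obtain ⟨T, hT, hcover⟩ := countable_cover_nhds_of_sigmaCompact fun x ↦ (hWo x).mem_nhds (hxW x)
  refine ⟨⋃ x ∈ T, C x, hT.biUnion fun x _ ↦ hCc x, fun γ hγ ↦ ?_, fun U hU hmaps ↦ ?_⟩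
  · obtain ⟨x, -, hγx⟩ := mem_iUnion₂.mp hγ
    exact hCs x γ hγx
  · have hCU : ∀ c ∈ T, IsPathConnected (U ∩ W c) ∧ W c ⊆ closure U := fun c hc ↦
      hC c U hU fun γ hγ ↦ hmaps γ (mem_biUnion hc hγ)
    have hmem : ∀ x, ∃ c ∈ T, x ∈ W c := fun x ↦ by
      simpa using hcover.symm.subset (mem_univ x)
    refine isPathConnected_of_dense_of_forall_exists_nhds (fun x ↦ ?_) fun x ↦ ?_
    · obtain ⟨c, hc, hx⟩ := hmem x
      exact (hCU c hc).2 hx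
    · obtain ⟨c, hc, hx⟩ := hmem x
      exact ⟨W c, (hWo c).mem_nhds hx, (hCU c hc).1⟩

end Manifold

section GeneralPosition

variable {E F M : Type*} [NormedAddCommGroup E] [NormedSpace ℝ E] [NormedAddCommGroup F]
  [NormedSpace ℝ F] [TopologicalSpace M] [ChartedSpace E M]

theorem dense_setOf_forall_add_ne_smul (hF : 2 < finrank ℝ F) {C : Set (ℝ → M)}
    (hC : C.Countable) (hCs : ∀ γ ∈ C, ContMDiffOn 𝓘(ℝ, ℝ) 𝓘(ℝ, E) 1 γ I) {P Q : M → F}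
    (hP : ContMDiff 𝓘(ℝ, E) 𝓘(ℝ, F) 1 P) (hQ : ContMDiff 𝓘(ℝ, E) 𝓘(ℝ, F) 1 Q) :
    Dense {v | ∀ γ ∈ C, ∀ t ∈ I, ∀ s : ℝ, P (γ t) + v ≠ s • Q (γ t)} := by
  have : FiniteDimensional ℝ F := .of_finrank_pos (by lia)
  let G (γ : ℝ → M) (p : ℝ × ℝ) : F := p.1 • Q (γ p.2) - P (γ p.2)
  let bad : Set F := ⋃ γ ∈ C, G γ '' (univ ×ˢ I)
  have hG : ∀ γ ∈ C, dimH (G γ '' (univ ×ˢ I)) ≤ 2 := fun γ hγ ↦ by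
    have hPγ : ContDiffOn ℝ 1 (P ∘ γ) I := (hP.comp_contMDiffOn (hCs γ hγ)).contDiffOn
    have hQγ : ContDiffOn ℝ 1 (Q ∘ γ) I := (hQ.comp_contMDiffOn (hCs γ hγ)).contDiffOn
    have hsnd : MapsTo (Prod.snd : ℝ × ℝ → ℝ) (univ ×ˢ I) I := fun p hp ↦ hp.2
    have hGs : ContDiffOn ℝ 1 (G γ) (univ ×ˢ I) :=
      (contDiffOn_fst.smul (hQγ.comp contDiffOn_snd hsnd)).sub (hPγ.comp contDiffOn_snd hsnd)
    calc dimH (G γ '' (univ ×ˢ I)) ≤ dimH (univ ×ˢ I : Set (ℝ × ℝ)) :=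
          hGs.dimH_image_le (convex_univ.prod (convex_Icc 0 1)) Subset.rfl
      _ ≤ dimH (univ : Set (ℝ × ℝ)) := dimH_mono (subset_univ _)
      _ = 2 := by rw [Real.dimH_univ_eq_finrank]; simp
  have hbad : dimH bad < finrank ℝ F := by
    rw [dimH_bUnion hC]
    exact (iSup₂_le hG).trans_lt (by exact_mod_cast hF)
  refine (dense_compl_of_dimH_lt_finrank hbad).mono fun v hv γ hγ t ht s hs ↦ ?_
  exact hv (mem_biUnion hγ ⟨(s, t), ⟨mem_univ s, ht⟩, by simp [G, ← hs]⟩)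

end GeneralPosition

section Coincidence

theorem not_sameRay_neg_of_dist_lt_one {F : Type*} [NormedAddCommGroup F] [NormedSpace ℝ F]
    {w : F} {y : sphere (0 : F) 1} (h : dist w y < 1) : ¬ SameRay ℝ w (-y) := fun hray ↦ by
  have hnorm : ‖w - y‖ = ‖w‖ + 1 := by simpa [sub_eq_add_neg] using hray.norm_add
  rw [dist_eq_norm, hnorm] at h
  linarith [norm_nonneg w]

theorem exists_eq_smul_of_radialProjection_eq_neg {X F : Type*} [TopologicalSpace X]
    [NormedAddCommGroup F] [NormedSpace ℝ F] {u w : C(X, F)} {hu : ∀ x, u x ≠ 0}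
    {hw : ∀ x, w x ≠ 0} {x : X} (h : radialProjection u hu x = -radialProjection w hw x) :
    ∃ s : ℝ, u x = s • w x := by
  obtain ⟨r, -, hr⟩ := (radialProjection_apply_eq_iff_sameRay.mp h).exists_nonneg_right
    (ne_zero_of_mem_unit_sphere _)
  refine ⟨-(r * ‖w x‖⁻¹), hr.trans ?_⟩
  simp [radialProjection, NormedSpace.normalize, smul_smul]

variable {E F M : Type*} [NormedAddCommGroup E] [NormedSpace ℝ E] [NormedAddCommGroup F]
  [NormedSpace ℝ F] [TopologicalSpace M] [ChartedSpace E M]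

theorem exists_homotopic_isPathConnected_setOf_ne_neg [FiniteDimensional ℝ E]
    [IsManifold 𝓘(ℝ, E) ∞ M] [T2Space M] [ConnectedSpace M] [SigmaCompactSpace M]
    (hF : 2 < finrank ℝ F) (f g : C(M, sphere (0 : F) 1)) :
    ∃ f' g' : C(M, sphere (0 : F) 1), f.Homotopic f' ∧ g.Homotopic g' ∧
      IsPathConnected {x | f' x ≠ -g' x} := by
  obtain ⟨C, hC, hCs, hpath⟩ :=
    exists_countable_curves_forall_isOpen_isPathConnected (E := E) (M := M)
  have happrox (h : C(M, sphere (0 : F) 1)) :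
      ∃ P : M → F, ContMDiff 𝓘(ℝ, E) 𝓘(ℝ, F) 1 P ∧ ∀ x, dist (P x) (h x) < 1 / 2 := by
    obtain ⟨P, hP, -⟩ := Continuous.exists_contMDiff_approx 𝓘(ℝ, E) 1
      (continuous_subtype_val.comp h.continuous) continuous_const fun _ ↦ one_half_pos (α := ℝ)
    exact ⟨P, P.contMDiff, hP⟩
  obtain ⟨P, hPs, hPf⟩ := happrox f
  obtain ⟨Q, hQs, hQg⟩ := happrox g
  obtain ⟨v, hgeneric, hv⟩ := (dense_setOf_forall_add_ne_smul hF hC hCs hPs hQs).exists_mem_open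
    (isOpen_ball (x := 0)) (nonempty_ball.mpr (one_half_pos (α := ℝ)))
  let p : C(M, F) := ⟨fun x ↦ P x + v, hPs.continuous.add_const v⟩
  let q : C(M, F) := ⟨Q, hQs.continuous⟩
  have hp : ∀ x, ¬ SameRay ℝ (p x) (-f x) := fun x ↦ not_sameRay_neg_of_dist_lt_one <| calc
    dist (P x + v) (f x) ≤ dist (P x + v) (P x) + dist (P x) (f x) := dist_triangle _ _ _
    _ < 1 / 2 + 1 / 2 := add_lt_add (by simpa using hv) (hPf x)
    _ = 1 := add_halves 1
  have hq : ∀ x, ¬ SameRay ℝ (q x) (-g x) := fun x ↦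
    not_sameRay_neg_of_dist_lt_one ((hQg x).trans one_half_lt_one)
  have hp0 : ∀ x, p x ≠ 0 := fun x hx ↦ hp x (by simp [hx])
  have hq0 : ∀ x, q x ≠ 0 := fun x hx ↦ hq x (by simp [hx])
  refine ⟨radialProjection p hp0, radialProjection q hq0, homotopic_radialProjection hp0 hp,
    homotopic_radialProjection hq0 hq, hpath _ ?_ fun γ hγ t ht heq ↦ ?_⟩
  · exact isOpen_ne_fun (ContinuousMap.continuous _) (ContinuousMap.continuous _).neg
  · obtain ⟨s, hs⟩ := exists_eq_smul_of_radialProjection_eq_neg heq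
    exact hgeneric γ hγ t ht s hs

theorem exists_homotopic_isPathConnected_setOf_eq [FiniteDimensional ℝ E]
    [IsManifold 𝓘(ℝ, E) ∞ M] [T2Space M] [ConnectedSpace M] [CompactSpace M]
    (hF : 2 < finrank ℝ F) (f g : C(M, sphere (0 : F) 1)) :
    ∃ f' g' : C(M, sphere (0 : F) 1), f.Homotopic f' ∧ g.Homotopic g' ∧
      IsPathConnected {x | f' x = g' x} := by
  obtain ⟨f', g', hf, hg, hU⟩ := exists_homotopic_isPathConnected_setOf_ne_neg (E := E) hF f g
  have hUo : IsOpen {x | f' x ≠ -g' x} := isOpen_ne_fun f'.continuous g'.continuous.neg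
  have hKU : {x | f' x = g' x} ⊆ {x | f' x ≠ -g' x} := fun x hx hneg ↦
    ne_neg_of_mem_unit_sphere ℝ (g' x) (Eq.trans (Eq.symm hx) hneg)
  obtain ⟨L, hLc, hLp, hKL, hLU⟩ := exists_isCompact_isPathConnected_between
    (isClosed_eq f'.continuous g'.continuous).isCompact hU fun x hx ↦
      exists_nhds_isCompact_isPathConnected_subset (E := E) (hUo.mem_nhds (hKU hx))
  obtain ⟨d, hsupp, hds, hd⟩ :=
    hLc.isClosed.isOpen_compl.exists_contMDiff_support_eq 𝓘(ℝ, E) (n := 0)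
  have hdL : ∀ x, d x = 0 ↔ x ∈ L := fun x ↦ by
    rw [← Function.notMem_support, hsupp, notMem_compl_iff]
  obtain ⟨f'', hf', hcoin⟩ := exists_homotopic_forall_eq_iff_eq_zero f' g' ⟨d, hds.continuous⟩ hd
    (fun x hx ↦ (hdL x).mpr (hKL hx)) fun x hx ↦ hLU ((hdL x).mp hx)
  have hset : {x | f'' x = g' x} = L := ext fun x ↦ (hcoin x).trans (hdL x)
  exact ⟨f'', g', hf.trans hf', hg, hset ▸ hLp⟩

theorem stmt3_general [FiniteDimensional ℝ E] [IsManifold 𝓘(ℝ, E) ∞ M] [T2Space M]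
    [ConnectedSpace M] [CompactSpace M] (hF : 2 < finrank ℝ F) (f₁ f₂ : C(M, sphere (0 : F) 1))
    (h : ¬ f₁.Homotopic ((sphereNeg F).comp f₂)) :
    (∀ f₁' f₂' : C(M, sphere (0 : F) 1), f₁.Homotopic f₁' → f₂.Homotopic f₂' →
      ∃ x, f₁' x = f₂' x) ∧
    (∃ f₁' f₂' : C(M, sphere (0 : F) 1), f₁.Homotopic f₁' ∧ f₂.Homotopic f₂' ∧
      PathConnectedSpace {x : M // f₁' x = f₂' x}) := by
  obtain ⟨f₁', f₂', h₁, h₂, hC⟩ := exists_homotopic_isPathConnected_setOf_eq (E := E) hF f₁ f₂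
  exact ⟨fun _ _ ↦ exists_eq_of_not_homotopic_sphereNeg_comp h,
    f₁', f₂', h₁, h₂, isPathConnected_iff_pathConnectedSpace.mp hC⟩

end Coincidence

theorem connectedSpace_sph {m : ℕ} (hm : 1 ≤ m) : ConnectedSpace (Sph m) :=
  isConnected_iff_connectedSpace.mp <| isConnected_sphere
    (by rw [← finrank_eq_rank, finrank_euclideanSpace_fin]; exact_mod_cast Nat.lt_succ_of_le hm)
    0 zero_le_one

theorem stmt3 (m n : ℕ) (hm : 1 ≤ m) (hn : 2 ≤ n)
    (f₁ f₂ : C(Sph m, Sph n))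
    (h : ¬ f₁.Homotopic ((antipodal n).comp f₂)) :
    (∀ f₁' f₂' : C(Sph m, Sph n), f₁.Homotopic f₁' → f₂.Homotopic f₂' →
      ∃ x, f₁' x = f₂' x) ∧
    (∃ f₁' f₂' : C(Sph m, Sph n), f₁.Homotopic f₁' ∧ f₂.Homotopic f₂' ∧
      PathConnectedSpace {x : Sph m // f₁' x = f₂' x}) := by
  have := connectedSpace_sph hm
  exact stmt3_general (E := EuclideanSpace ℝ (Fin m)) (by simpa using hn) f₁ f₂ h
end

section
/- Let m, n ≥ 1 and let A₁, A₂ be n×m integer matrices, with induced homomorphisms f_{A₁}, f_{A₂} : Tᵐ → Tⁿ of tori. Then there is a bijection between the set of path components of the homotopy coincidence space E(f_{A₁}, f_{A₂}) and the quotient group ℤⁿ / (A₁−A₂)(ℤᵐ), where (A₁−A₂)(ℤᵐ) is the image of the ℤ-linear map ℤᵐ → ℤⁿ given by the matrix A₁−A₂. -/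
/-- The `k`-torus `(ℝ/ℤ)ᵏ`. -/
abbrev Torus (k : ℕ) : Type := Fin k → AddCircle (1 : ℝ)

/-- The continuous homomorphism `Tᵐ → Tⁿ` induced by an `n × m` integer matrix. -/
noncomputable def torusHom {m n : ℕ} (A : Matrix (Fin n) (Fin m) ℤ) :
    C(Torus m, Torus n) :=
  ⟨fun x j => ∑ i, A j i • x i, by
    refine continuous_pi fun j => ?_
    exact continuous_finset_sum _ fun i _ => (continuous_apply i).zsmul (A j i)⟩

/-!
Let `L₁`, `L₂` be the linear maps lifting the two torus maps to the universal coverings. Lift a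
coincidence `(x, θ)` to a vector `v` over `x` and a path `θ̃` over `θ` starting at `L₁ v`; it ends
at `L₂ v + c` for some lattice vector `c`. Coincidences with a common `c` form a path-connected set,
because their lifts form a convex one; `c` can be kept constant along paths by homotopy lifting; and
replacing `v` by `v + k`, for a lattice vector `k`, replaces `c` by `c + (L₁ - L₂) k`. So the path
components are the classes of lattice vectors `c` modulo the image of the lattice under `L₁ - L₂`.
-/

open unitInterval Topology

theorem nonempty_zerothHomotopy_equiv_quotient {E ι : Type*} [TopologicalSpace E] (r : Setoid ι)
    (S : ι → Set E) (hS : ∀ c, IsPathConnected (S c)) (hcover : ∀ e, ∃ c, e ∈ S c)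
    (hclosed : ∀ c e e', Joined e e' → e ∈ S c → e' ∈ S c)
    (hr : ∀ c c', r c c' ↔ (S c ∩ S c').Nonempty) :
    Nonempty (ZerothHomotopy E ≃ Quotient r) := by
  choose base hbase using fun c => (hS c).nonempty
  have joined_base {c : ι} {e : E} (he : e ∈ S c) : Joined (base c) e :=
    ((hS c).joinedIn _ (hbase c) _ he).joined
  have hker (c c' : ι) : ZerothHomotopy.mk (base c) = .mk (base c') ↔ r c c' := by
    rw [hr]
    refine ⟨fun h => ⟨base c', hclosed c _ _ (Quotient.exact h) (hbase c), hbase c'⟩, ?_⟩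
    rintro ⟨e, he, he'⟩
    exact Quotient.sound ((joined_base he).trans (joined_base he').symm)
  have hsurj : Function.Surjective fun c => ZerothHomotopy.mk (base c) := by
    intro a
    obtain ⟨e, rfl⟩ := ZerothHomotopy.mk_surjective a
    obtain ⟨c, hc⟩ := hcover e
    exact ⟨c, Quotient.sound (joined_base hc)⟩
  exact ⟨((Quotient.congrRight hker).symm.trans (Setoid.quotientKerEquivOfSurjective _ hsurj)).symm⟩

section LinearLifts

variable {V W : Type*} [AddCommGroup V] [Module ℝ V] [TopologicalSpace V]
  [AddCommGroup W] [Module ℝ W] [TopologicalSpace W]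

/-- The lifted coincidences with displacement `w`: a vector `v` together with a path from `L₁ v`
to `L₂ v + w`. -/
def liftedHCS (L₁ L₂ : V →L[ℝ] W) (w : W) : Set (V × C(I, W)) :=
  {z | z.2 0 = L₁ z.1 ∧ z.2 1 = L₂ z.1 + w}

theorem liftedHCS_nonempty [ContinuousSMul ℝ W] (L₁ L₂ : V →L[ℝ] W) (w : W) :
    (liftedHCS L₁ L₂ w).Nonempty :=
  ⟨(0, ⟨fun s => (s : ℝ) • w, by fun_prop⟩), by simp [liftedHCS]⟩

theorem convex_liftedHCS [ContinuousAdd W] [ContinuousSMul ℝ W] (L₁ L₂ : V →L[ℝ] W) (w : W) :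
    Convex ℝ (liftedHCS L₁ L₂ w) := by
  rintro ⟨v, θ⟩ ⟨hθ₀, hθ₁⟩ ⟨v', θ'⟩ ⟨hθ₀', hθ₁'⟩ a b - - hab
  have hw : w = a • w + b • w := by rw [← add_smul, hab, one_smul]
  dsimp only at hθ₀ hθ₁ hθ₀' hθ₁'
  constructor
  · simp [hθ₀, hθ₀']
  · simp only [Prod.fst_add, Prod.snd_add, Prod.smul_mk, ContinuousMap.add_apply,
      ContinuousMap.smul_apply, map_add, map_smul, hθ₁, hθ₁', smul_add]
    nth_rw 3 [hw]
    abel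

variable {X Y : Type} [AddCommGroup X] [TopologicalSpace X] [AddCommGroup Y] [TopologicalSpace Y]
  {p : V →+ X} {q : W →+ Y} {L₁ L₂ : V →L[ℝ] W} {f₁ f₂ : C(X, Y)}

variable (p q L₁ L₂ f₁ f₂) in
/-- The Reidemeister class of `w`: the coincidences having a lift with displacement `w` along
`p` and `q`. -/
def reidemeisterClass (w : W) : Set (HCS f₁ f₂) :=
  {e | ∃ z ∈ liftedHCS L₁ L₂ w, p z.1 = e.1.1 ∧ ∀ s, q (z.2 s) = e.1.2 s}

theorem isPathConnected_reidemeisterClass [IsTopologicalAddGroup V] [ContinuousSMul ℝ V]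
    [IsTopologicalAddGroup W] [ContinuousSMul ℝ W] (hp : Continuous p) (hq : Continuous q)
    (hf₁ : ∀ v, f₁ (p v) = q (L₁ v)) (hf₂ : ∀ v, f₂ (p v) = q (L₂ v)) {w : W} (hw : q w = 0) :
    IsPathConnected (reidemeisterClass p q L₁ L₂ f₁ f₂ w) := by
  let π : liftedHCS L₁ L₂ w → HCS f₁ f₂ := fun z =>
    ⟨(p z.1.1, (⟨q, hq⟩ : C(W, Y)).comp z.1.2), by simp [z.2.1, hf₁], by simp [z.2.2, hf₂, hw]⟩
  have hπ : Continuous π := by fun_prop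
  have hrange : Set.range π = reidemeisterClass p q L₁ L₂ f₁ f₂ w := by
    ext e
    constructor
    · rintro ⟨z, rfl⟩
      exact ⟨z, z.2, rfl, fun _ => rfl⟩
    · rintro ⟨z, hz, hx, hθ⟩
      exact ⟨⟨z, hz⟩, Subtype.ext (Prod.ext hx (ContinuousMap.ext hθ))⟩
  have : PathConnectedSpace (liftedHCS L₁ L₂ w) := isPathConnected_iff_pathConnectedSpace.1
    ((convex_liftedHCS L₁ L₂ w).isPathConnected (liftedHCS_nonempty L₁ L₂ w))
  exact hrange ▸ isPathConnected_range hπ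

theorem exists_mem_reidemeisterClass (hp : Function.Surjective p) (hq : IsCoveringMap q)
    (hf₁ : ∀ v, f₁ (p v) = q (L₁ v)) (hf₂ : ∀ v, f₂ (p v) = q (L₂ v)) (e : HCS f₁ f₂) :
    ∃ w, q w = 0 ∧ e ∈ reidemeisterClass p q L₁ L₂ f₁ f₂ w := by
  obtain ⟨⟨x, θ⟩, h₀, h₁⟩ := e
  obtain ⟨v, rfl⟩ := hp x
  obtain ⟨θ', hθ', hθ'₀⟩ := hq.exists_path_lifts θ (L₁ v) (h₀.trans (hf₁ v))
  have hlift (s : I) : q (θ' s) = θ s := congrFun hθ' s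
  refine ⟨θ' 1 - L₂ v, ?_, (v, θ'), ⟨hθ'₀, by simp⟩, rfl, hlift⟩
  rw [map_sub, hlift, ← hf₂, sub_eq_zero]
  exact h₁

theorem mem_reidemeisterClass_of_joined [ContinuousAdd W] (hp : IsCoveringMap p)
    (hq : IsCoveringMap q) (hf₁ : ∀ v, f₁ (p v) = q (L₁ v)) (hf₂ : ∀ v, f₂ (p v) = q (L₂ v))
    {w : W} (hw : q w = 0) {e e' : HCS f₁ f₂} (hee' : Joined e e')
    (he : e ∈ reidemeisterClass p q L₁ L₂ f₁ f₂ w) :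
    e' ∈ reidemeisterClass p q L₁ L₂ f₁ f₂ w := by
  obtain ⟨γ⟩ := hee'
  obtain ⟨⟨v, θ⟩, ⟨hθ₀, hθ₁⟩, hv, hθ⟩ := he
  dsimp only at hθ₀ hθ₁ hv hθ
  obtain ⟨ν, hν, hν₀⟩ := hp.exists_path_lifts ⟨fun t => (γ t).1.1, by fun_prop⟩ v (by simp [hv])
  replace hν (t : I) : p (ν t) = (γ t).1.1 := congrFun hν t
  have hstart (t : I) : (γ t).1.2 0 = q (L₁ (ν t)) := by rw [(γ t).2.1, ← hν, hf₁]
  let H : C(I × I, Y) := ⟨fun z => (γ z.2).1.2 z.1, by fun_prop⟩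
  let G : C(I × I, W) := hq.liftHomotopy H ⟨fun t => L₁ (ν t), by fun_prop⟩ hstart
  have hG (s t : I) : q (G (s, t)) = (γ t).1.2 s :=
    congrFun (hq.liftHomotopy_lifts H _ hstart) (s, t)
  have hG₀ (t : I) : G (0, t) = L₁ (ν t) := hq.liftHomotopy_zero H _ hstart t
  have hGθ : (fun s => G (s, 0)) = θ :=
    hq.eq_of_comp_eq (by fun_prop) (by fun_prop) (by ext s; simp [hG, hθ]) 0
      (by rw [hG₀, hν₀, hθ₀])
  have hG₁ : (fun t => G (1, t)) = fun t => L₂ (ν t) + w :=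
    hq.eq_of_comp_eq (by fun_prop) (by fun_prop)
      (by ext t; simp [hG, (γ t).2.2, ← hν, hf₂, hw]) 0
      (by rw [congrFun hGθ 1, hθ₁, hν₀])
  exact ⟨(ν 1, ⟨fun s => G (s, 1), by fun_prop⟩), ⟨hG₀ 1, congrFun hG₁ 1⟩, by simp [hν],
    fun s => by simp [hG]⟩

theorem map_lift_eq_zero (hf₁ : ∀ v, f₁ (p v) = q (L₁ v)) {k : V} (hk : p k = 0) :
    q (L₁ k) = 0 := by
  rw [← hf₁, hk, ← map_zero p, hf₁, map_zero, map_zero]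

theorem exists_sub_eq_of_mem_reidemeisterClass [ContinuousAdd W] (hq : IsCoveringMap q)
    (hf₁ : ∀ v, f₁ (p v) = q (L₁ v)) {w w' : W} {e : HCS f₁ f₂}
    (he : e ∈ reidemeisterClass p q L₁ L₂ f₁ f₂ w)
    (he' : e ∈ reidemeisterClass p q L₁ L₂ f₁ f₂ w') :
    ∃ k, p k = 0 ∧ w - w' = L₁ k - L₂ k := by
  obtain ⟨⟨v, θ⟩, ⟨hθ₀, hθ₁⟩, hv, hθ⟩ := he
  obtain ⟨⟨v', θ'⟩, ⟨hθ₀', hθ₁'⟩, hv', hθ'⟩ := he'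
  dsimp only at hθ₀ hθ₁ hv hθ hθ₀' hθ₁' hv' hθ'
  have hk : p (v - v') = 0 := by rw [map_sub, hv, hv', sub_self]
  have hqL₁ : q (L₁ (v - v')) = 0 := map_lift_eq_zero hf₁ hk
  have hθθ' : (θ : I → W) = fun s => θ' s + L₁ (v - v') :=
    hq.eq_of_comp_eq (by fun_prop) (by fun_prop)
      (by ext s; rw [Function.comp_apply, Function.comp_apply, map_add, hqL₁, hθ, hθ', add_zero]) 0
      (by rw [hθ₀, hθ₀', map_sub, add_sub_cancel])
  have hend : L₂ v + w = L₂ v' + w' + L₁ (v - v') := by rw [← hθ₁, ← hθ₁', congrFun hθθ' 1]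
  refine ⟨v - v', hk, ?_⟩
  rw [sub_eq_iff_eq_add, ← add_right_inj (L₂ v), hend, map_sub L₂]
  abel

theorem reidemeisterClass_subset_of_sub_eq [ContinuousAdd W]
    (hf₁ : ∀ v, f₁ (p v) = q (L₁ v)) {w w' : W} {k : V} (hk : p k = 0)
    (hww' : w - w' = L₁ k - L₂ k) :
    reidemeisterClass p q L₁ L₂ f₁ f₂ w' ⊆ reidemeisterClass p q L₁ L₂ f₁ f₂ w := by
  rintro e ⟨⟨v, θ⟩, ⟨hθ₀, hθ₁⟩, hv, hθ⟩
  dsimp only at hθ₀ hθ₁ hv hθ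
  have hqL₁ : q (L₁ k) = 0 := map_lift_eq_zero hf₁ hk
  refine ⟨(v + k, ⟨fun s => θ s + L₁ k, by fun_prop⟩), ⟨?_, ?_⟩, by simp [hk, hv], fun s => ?_⟩
  · simp [hθ₀]
  · rw [ContinuousMap.coe_mk, hθ₁, map_add, sub_eq_iff_eq_add.1 hww']
    abel
  · simp [hqL₁, hθ]

theorem stmt4_general [IsTopologicalAddGroup V] [ContinuousSMul ℝ V]
    [IsTopologicalAddGroup W] [ContinuousSMul ℝ W]
    {Λ M : Type*} [AddCommGroup Λ] [AddCommGroup M] {i : Λ →+ V} {j : M →+ W}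
    (hp : IsCoveringMap p) (hp_surj : Function.Surjective p) (hip : Function.Exact i p)
    (hq : IsCoveringMap q) (hj : Function.Injective j) (hjq : Function.Exact j q)
    (hf₁ : ∀ v, f₁ (p v) = q (L₁ v)) (hf₂ : ∀ v, f₂ (p v) = q (L₂ v))
    (φ : Λ →ₗ[ℤ] M) (hφ : ∀ k, j (φ k) = L₁ (i k) - L₂ (i k)) :
    Nonempty (ZerothHomotopy (HCS f₁ f₂) ≃ M ⧸ LinearMap.range φ) := by
  have hqj (c : M) : q (j c) = 0 := hjq.apply_apply_eq_zero c
  have hclass (c : M) : IsPathConnected (reidemeisterClass p q L₁ L₂ f₁ f₂ (j c)) :=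
    isPathConnected_reidemeisterClass hp.continuous hq.continuous hf₁ hf₂ (hqj c)
  refine nonempty_zerothHomotopy_equiv_quotient (Submodule.quotientRel (LinearMap.range φ))
    (fun c => reidemeisterClass p q L₁ L₂ f₁ f₂ (j c)) hclass (fun e => ?_)
    (fun c _ _ => mem_reidemeisterClass_of_joined hp hq hf₁ hf₂ (hqj c)) fun c c' => ?_
  · obtain ⟨w, hw, he⟩ := exists_mem_reidemeisterClass hp_surj hq hf₁ hf₂ e
    obtain ⟨c, rfl⟩ := (hjq w).1 hw
    exact ⟨c, he⟩
  · rw [Submodule.quotientRel_def]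
    constructor
    · rintro ⟨k, hk⟩
      have hcc' : j c - j c' = L₁ (i k) - L₂ (i k) := by rw [← map_sub, ← hk, hφ]
      obtain ⟨e, he⟩ := (hclass c').nonempty
      exact ⟨e, reidemeisterClass_subset_of_sub_eq hf₁ (hip.apply_apply_eq_zero k) hcc' he, he⟩
    · rintro ⟨e, he, he'⟩
      obtain ⟨v, hv, hcc'⟩ := exists_sub_eq_of_mem_reidemeisterClass hq hf₁ he he'
      obtain ⟨k, rfl⟩ := (hip v).1 hv
      exact ⟨k, hj (by rw [hφ, map_sub, hcc'])⟩

end LinearLifts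

section Torus

/-- The universal covering `ℝᵏ → Tᵏ` of the torus. -/
def torusProj (k : ℕ) : (Fin k → ℝ) →+ Torus k :=
  (QuotientAddGroup.mk' (AddSubgroup.zmultiples (1 : ℝ))).compLeft (Fin k)

/-- The lattice inclusion `ℤᵏ → ℝᵏ`. -/
def intLattice (k : ℕ) : (Fin k → ℤ) →+ (Fin k → ℝ) :=
  (Int.castAddHom ℝ).compLeft (Fin k)

theorem intLattice_injective (k : ℕ) : Function.Injective (intLattice k) :=
  Int.cast_injective.comp_left

theorem exact_intLattice_torusProj (k : ℕ) : Function.Exact (intLattice k) (torusProj k) := by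
  intro x
  have hcoord (i : Fin k) : (x i : AddCircle (1 : ℝ)) = 0 ↔ ∃ z : ℤ, (z : ℝ) = x i := by
    rw [AddCircle.coe_eq_zero_iff]
    simp
  calc torusProj k x = 0 ↔ ∀ i, (x i : AddCircle (1 : ℝ)) = 0 := funext_iff
    _ ↔ ∃ z : Fin k → ℤ, ∀ i, (z i : ℝ) = x i := by simp only [hcoord, Classical.skolem]
    _ ↔ x ∈ Set.range (intLattice k) := exists_congr fun _ => funext_iff.symm

theorem isOpenQuotientMap_torusProj (k : ℕ) : IsOpenQuotientMap (torusProj k) :=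
  IsOpenQuotientMap.piMap fun _ => QuotientAddGroup.isOpenQuotientMap_mk

theorem isDiscrete_ker_torusProj (k : ℕ) : IsDiscrete ((torusProj k).ker : Set (Fin k → ℝ)) := by
  have hker : ((torusProj k).ker : Set (Fin k → ℝ)) = Set.range (intLattice k) :=
    Set.ext (exact_intLattice_torusProj k)
  have hemb : IsEmbedding (intLattice k) :=
    IsEmbedding.piMap fun _ => Int.isClosedEmbedding_coe_real.isEmbedding
  exact hker ▸ hemb.isDiscrete_range

theorem isCoveringMap_torusProj (k : ℕ) : IsCoveringMap (torusProj k) :=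
  have hquot := (isOpenQuotientMap_torusProj k).isQuotientMap
  (hquot.isAddQuotientCoveringMap_of_isDiscrete_ker_addMonoidHom
    (isDiscrete_ker_torusProj k)).isCoveringMap

variable {m n : ℕ}

/-- The linear map `ℝᵐ → ℝⁿ` of an integer matrix, which lifts `torusHom`. -/
noncomputable def torusLift (A : Matrix (Fin n) (Fin m) ℤ) : (Fin m → ℝ) →L[ℝ] (Fin n → ℝ) :=
  (A.map (Int.castRingHom ℝ)).mulVecLin.toContinuousLinearMap

theorem torusHom_torusProj (A : Matrix (Fin n) (Fin m) ℤ) (v : Fin m → ℝ) :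
    torusHom A (torusProj m v) = torusProj n (torusLift A v) := by
  ext j
  let π := QuotientAddGroup.mk' (AddSubgroup.zmultiples (1 : ℝ))
  calc ∑ i, A j i • π (v i) = π (∑ i, A j i • v i) := by simp only [map_sum, map_zsmul]
    _ = π (∑ i, (A j i : ℝ) * v i) := by simp only [zsmul_eq_mul]

theorem torusLift_intLattice (A : Matrix (Fin n) (Fin m) ℤ) (k : Fin m → ℤ) :
    torusLift A (intLattice m k) = intLattice n (A.mulVec k) :=
  funext fun j => ((Int.castRingHom ℝ).map_mulVec A k j).symm

theorem intLattice_sub_mulVec (A₁ A₂ : Matrix (Fin n) (Fin m) ℤ) (k : Fin m → ℤ) :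
    intLattice n ((A₁ - A₂).mulVecLin k) =
      torusLift A₁ (intLattice m k) - torusLift A₂ (intLattice m k) := by
  rw [Matrix.mulVecLin_apply, Matrix.sub_mulVec, map_sub, torusLift_intLattice,
    torusLift_intLattice]

end Torus

theorem stmt4 (m n : ℕ) (hm : 1 ≤ m) (hn : 1 ≤ n)
    (A₁ A₂ : Matrix (Fin n) (Fin m) ℤ) :
    Nonempty (ZerothHomotopy (HCS (torusHom A₁) (torusHom A₂)) ≃
      ((Fin n → ℤ) ⧸ LinearMap.range (A₁ - A₂).mulVecLin)) := by
  exact stmt4_general (isCoveringMap_torusProj m) (isOpenQuotientMap_torusProj m).surjective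
    (exact_intLattice_torusProj m) (isCoveringMap_torusProj n) (intLattice_injective n)
    (exact_intLattice_torusProj n) (torusHom_torusProj A₁) (torusHom_torusProj A₂)
    (A₁ - A₂).mulVecLin (intLattice_sub_mulVec A₁ A₂)
end

section
/- Let m, n ≥ 1 and let A₁, A₂ be n×m integer matrices such that A₁−A₂ has rank strictly less than n over ℚ. Then the pair (f_{A₁}, f_{A₂}) of induced torus homomorphisms Tᵐ → Tⁿ is loose: there exist continuous maps f₁' homotopic to f_{A₁} and f₂' homotopic to f_{A₂} with f₁'(x) ≠ f₂'(x) for all x ∈ Tᵐ. -/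
/-- A pair of maps is loose if it can be deformed to a coincidence free pair. -/
def Loose {X Y : Type} [TopologicalSpace X] [TopologicalSpace Y]
    (f₁ f₂ : C(X, Y)) : Prop :=
  ∃ f₁' f₂' : C(X, Y), f₁.Homotopic f₁' ∧ f₂.Homotopic f₂' ∧ ∀ x, f₁' x ≠ f₂' x

/-!
If `A₁ - A₂` has rank `< n`, some nonzero integer row vector `v` satisfies `v A₁ = v A₂`, so the
character `χ` of `Tⁿ` given by `v` takes the same values on `f_{A₁}` and `f_{A₂}`. Translating
`f_{A₁}` by any `c` with `χ c ≠ 0` makes the two maps disagree under `χ` everywhere, and the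
translation is homotopic to the identity because `Tⁿ` is path connected.
-/

theorem homotopic_add {X Y : Type*} [TopologicalSpace X] [TopologicalSpace Y] [Add Y]
    [ContinuousAdd Y] {f₀ f₁ g₀ g₁ : C(X, Y)} (hf : f₀.Homotopic f₁) (hg : g₀.Homotopic g₁) :
    (f₀ + g₀).Homotopic (f₁ + g₁) :=
  (ContinuousMap.Homotopic.refl ⟨fun p : Y × Y => p.1 + p.2, continuous_add⟩).comp (hf.prodMk hg)

theorem homotopic_add_const {X Y : Type*} [TopologicalSpace X] [TopologicalSpace Y]
    [AddZeroClass Y] [ContinuousAdd Y] [PathConnectedSpace Y] (f : C(X, Y)) (c : Y) :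
    f.Homotopic (f + ContinuousMap.const X c) := by
  have hconst : (ContinuousMap.const X 0).Homotopic (ContinuousMap.const X c) :=
    ⟨(PathConnectedSpace.joined 0 c).somePath.toHomotopyConst⟩
  simpa only [ContinuousMap.const_zero, add_zero] using
    homotopic_add (ContinuousMap.Homotopic.refl f) hconst

theorem loose_of_addMonoidHom_apply_eq {X Y : Type} {Z : Type*} [TopologicalSpace X]
    [TopologicalSpace Y] [AddZeroClass Y] [ContinuousAdd Y] [PathConnectedSpace Y]
    [AddZeroClass Z] [IsLeftCancelAdd Z] {f₁ f₂ : C(X, Y)} {φ : Y →+ Z} (hφ : φ ≠ 0)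
    (hf : ∀ x, φ (f₁ x) = φ (f₂ x)) :
    Loose f₁ f₂ := by
  obtain ⟨c, hc⟩ : ∃ c, φ c ≠ 0 := DFunLike.ne_iff.mp hφ
  refine ⟨f₁ + ContinuousMap.const X c, f₂, homotopic_add_const f₁ c, .refl f₂, fun x hx => hc ?_⟩
  have hcancel : φ (f₁ x) + φ c = φ (f₁ x) + 0 := calc
    φ (f₁ x) + φ c = φ (f₁ x + c) := (map_add φ _ _).symm
    _ = φ (f₂ x) := congrArg φ hx
    _ = φ (f₁ x) + 0 := by rw [hf x, add_zero]
  exact add_left_cancel hcancel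

theorem torusHom_add {m n : ℕ} (A : Matrix (Fin n) (Fin m) ℤ) (x y : Torus m) :
    torusHom A (x + y) = torusHom A x + torusHom A y := by
  ext j
  simp only [torusHom, ContinuousMap.coe_mk, Pi.add_apply, smul_add, Finset.sum_add_distrib]

theorem torusHom_mul_apply {k m n : ℕ} (A : Matrix (Fin k) (Fin n) ℤ)
    (B : Matrix (Fin n) (Fin m) ℤ) (x : Torus m) :
    torusHom (A * B) x = torusHom A (torusHom B x) := by
  ext j
  simp only [torusHom, ContinuousMap.coe_mk, Matrix.mul_apply, Finset.sum_smul, Finset.smul_sum,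
    mul_smul]
  exact Finset.sum_comm

theorem torusHom_single_apply {m n : ℕ} (A : Matrix (Fin n) (Fin m) ℤ) (i : Fin m)
    (t : AddCircle (1 : ℝ)) (j : Fin n) : torusHom A (Pi.single i t) j = A j i • t := by
  simp [torusHom, Pi.single_apply]

theorem exists_zsmul_addCircle_ne_zero {𝕜 : Type*} [Field 𝕜] [LinearOrder 𝕜]
    [IsStrictOrderedRing 𝕜] (p : 𝕜) [Fact (0 < p)] {a : ℤ} (ha : a ≠ 0) :
    ∃ t : AddCircle p, a • t ≠ 0 := by
  have horder : addOrderOf ((p / (a.natAbs + 1 : ℕ) : 𝕜) : AddCircle p) = a.natAbs + 1 :=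
    AddCircle.addOrderOf_period_div a.natAbs.succ_pos
  refine ⟨(p / (a.natAbs + 1 : ℕ) : 𝕜), fun hzero => ?_⟩
  have hdvd := addOrderOf_dvd_iff_zsmul_eq_zero.mpr hzero
  rw [horder, Int.natCast_dvd] at hdvd
  exact absurd (Nat.le_of_dvd (Int.natAbs_pos.mpr ha) hdvd) (Nat.not_succ_le_self _)

theorem exists_torusHom_ne_zero {m n : ℕ} {A : Matrix (Fin n) (Fin m) ℤ} (hA : A ≠ 0) :
    ∃ x, torusHom A x ≠ 0 := by
  obtain ⟨j, i, hji⟩ : ∃ j i, A j i ≠ 0 := by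
    contrapose! hA
    exact Matrix.ext hA
  obtain ⟨t, ht⟩ := exists_zsmul_addCircle_ne_zero (1 : ℝ) hji
  refine ⟨Pi.single i t, fun hzero => ht ?_⟩
  rw [← torusHom_single_apply, hzero, Pi.zero_apply]

theorem loose_torusHom_of_mul_eq_mul {k m n : ℕ} {A₁ A₂ : Matrix (Fin n) (Fin m) ℤ}
    {C : Matrix (Fin k) (Fin n) ℤ} (hC : C ≠ 0) (hCA : C * A₁ = C * A₂) :
    Loose (torusHom A₁) (torusHom A₂) := by
  obtain ⟨c, hc⟩ := exists_torusHom_ne_zero hC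
  refine loose_of_addMonoidHom_apply_eq (φ := AddMonoidHom.mk' (torusHom C) (torusHom_add C))
    (DFunLike.ne_iff.mpr ⟨c, hc⟩) fun x => ?_
  simp only [AddMonoidHom.mk'_apply, ← torusHom_mul_apply, hCA]

theorem exists_vecMul_eq_zero_of_rank_map_lt {R K ι κ : Type*} [CommRing R] [Field K]
    [Algebra R K] [IsFractionRing R K] [Fintype ι] [Fintype κ] {B : Matrix ι κ R}
    (hB : (B.map (algebraMap R K)).rank < Fintype.card ι) : ∃ v ≠ 0, Matrix.vecMul v B = 0 := by
  have hdep : ¬ LinearIndependent R B.row := fun hrow => by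
    have hrowR : LinearIndependent R (B.map (algebraMap R K)).row :=
      hrow.map_injOn ((Algebra.linearMap R K).compLeft κ)
        (IsFractionRing.injective R K).comp_left.injOn
    have hrowK := (LinearIndependent.iff_fractionRing R K).mp hrowR
    exact hB.ne hrowK.rank_matrix
  rw [← Matrix.vecMul_injective_iff, ← Matrix.coe_vecMulLinear, injective_iff_map_eq_zero] at hdep
  push Not at hdep
  obtain ⟨v, hvB, hv⟩ := hdep
  exact ⟨v, hv, hvB⟩

theorem stmt6 (m n : ℕ) (hm : 1 ≤ m) (hn : 1 ≤ n)
    (A₁ A₂ : Matrix (Fin n) (Fin m) ℤ)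
    (hrank : ((A₁ - A₂).map (Int.cast : ℤ → ℚ)).rank < n) :
    Loose (torusHom A₁) (torusHom A₂) := by
  obtain ⟨v, hv, hvA⟩ :=
    exists_vecMul_eq_zero_of_rank_map_lt (K := ℚ) (hrank.trans_eq (Fintype.card_fin n).symm)
  rw [Matrix.vecMul_sub, sub_eq_zero] at hvA
  refine loose_torusHom_of_mul_eq_mul (C := Matrix.replicateRow (Fin 1) v)
    (mt (Matrix.replicateRow_eq_zero v).mp hv) ?_
  rw [← Matrix.replicateRow_vecMul, ← Matrix.replicateRow_vecMul, hvA]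
end
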